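/- Let (D,V) be a Dyer system and let X ⊆ V. For every g ∈ D there exists a unique element g_0 of the left coset gD_X such that for all h ∈ D_X one has l_sy(g_0 h) = l_sy(g_0) + l_sy(h) and l_V(g_0 h) = l_V(g_0) + l_V(h). -/

import Mathlib

/-!
The proof rests on a reflection cocycle with values in cyclic groups.
Let `M` be the group of families `F (r, n) : ZMod n` indexed by pairs `(r, n) ∈ D × ℕ`, on which the
Dyer group `D` acts by conjugating `r`. Writing `n x` for the order `f x` (with `0` in place of `∞`)
and `e (r, n)` for the unit vector, the assignment `x ↦ e (x, n x)` extends to a cocycle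
`N : D → M`, `N (g h) = N g + g • N h` (`coc_mul`). The defining relations are respected: `N (x ^ k)`
is `k • e (x, n x)`, the relation with `m = 2` just says that `x` and `y` commute, and for `m ≠ 2`
the generators are involutions, and each of the reflections `(xy)^j x`, `j < m`, occurs twice in the
translation part of `(xy)^m`, hence with coefficient `0` in `ZMod 2`.

If `N (w)` does not vanish at `(r, n)` for a word `w` in syllables, then some syllable `x ^ a` of `w`
satisfies `r = p x p⁻¹` and `n = n x`, where `p` is the prefix before it (`exists_split`).
Consequently two syllables with the same reflection can be merged, so for a syllable word of minimal
length the reflections are pairwise distinct. This identifies the syllable length of `g` with the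
size of the support of `N g`, and the word length with the sum of the minimal absolute values of
the coefficients of `N g` (`sylLength_eq`, `wordLength_eq`).

Finally let `g₀` have minimal syllable length in `g D_X`. If the supports of `N g₀` and `g₀ • N h`
met for some `h ∈ D_X`, a syllable of `g₀` could be deleted by right multiplication with an element
of `D_X`, against minimality. So these supports are disjoint and both lengths are additive.
Another element of the coset with additive lengths has syllable length at most that of `g₀`,
and differs from `g₀` by an element of `D_X` of length `0`, so it equals `g₀`.
-/

open scoped Classical

/-- The word length of `g` with respect to the alphabet `S ∪ S⁻¹`. -/
noncomputable def wordLength {G : Type*} [Group G] (S : Set G) (g : G) : ℕ :=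
  sInf {n | ∃ w : List G, w.length = n ∧ (∀ a ∈ w, a ∈ S ∪ S⁻¹) ∧ w.prod = g}

/-- The syllable length of `g` with respect to `S`. -/
noncomputable def sylLength {G : Type*} [Group G] (S : Set G) (g : G) : ℕ :=
  sInf {n | ∃ w : List (G × ℤ), w.length = n ∧ (∀ p ∈ w, p.1 ∈ S) ∧
    (w.map fun p => p.1 ^ p.2).prod = g}

/-- The growth series of a subset `A` of a group `G` with respect to a generating set `S`:
the coefficient of `t^n` is the number of elements of `A` of word length `n`. -/
noncomputable def growthSeries {G : Type*} [Group G] (S : Set G) (A : Set G) :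
    PowerSeries ℤ :=
  PowerSeries.mk fun n => (Set.ncard {g ∈ A | wordLength S g = n} : ℤ)

/-- A Dyer graph. -/
structure DyerGraph (V : Type*) where
  Adj : V → V → Prop
  symm : ∀ {x y}, Adj x y → Adj y x
  loopless : ∀ x, ¬ Adj x x
  m : V → V → ℕ
  m_symm : ∀ x y, m x y = m y x
  m_ge : ∀ {x y}, Adj x y → 2 ≤ m x y
  f : V → ℕ∞
  f_ge : ∀ x, 2 ≤ f x
  compat : ∀ {x y}, Adj x y → m x y ≠ 2 → f x = 2 ∧ f y = 2

namespace DyerGraph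

variable {V : Type*} (Γ : DyerGraph V)

/-- The alternating word `π(x, y, n) = xyxy⋯` of length `n` in the free group. -/
def altWord (x y : V) : ℕ → FreeGroup V
  | 0 => 1
  | n + 1 => FreeGroup.of x * altWord y x n

/-- The defining relations of the Dyer group. -/
def rels : Set (FreeGroup V) :=
  {r | ∃ x : V, Γ.f x ≠ ⊤ ∧ r = FreeGroup.of x ^ (Γ.f x).toNat} ∪
  {r | ∃ x y : V, Γ.Adj x y ∧
      r = altWord x y (Γ.m x y) * (altWord y x (Γ.m x y))⁻¹}

/-- The Dyer group associated to a Dyer graph. -/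
abbrev DyerGroup := PresentedGroup Γ.rels

/-- The standard generator of the Dyer group corresponding to a vertex. -/
def gen (x : V) : Γ.DyerGroup := PresentedGroup.of x

/-- The standard parabolic subgroup generated by `X ⊆ V`. -/
def parabolic (X : Set V) : Subgroup Γ.DyerGroup := Subgroup.closure (Γ.gen '' X)

/-- The set of vertices with `f x = 2`. -/
def V2 : Set V := {x | Γ.f x = 2}

/-- The set of vertices with `2 < f x < ∞`. -/
def Vp : Set V := {x | 2 < Γ.f x ∧ Γ.f x ≠ ⊤}

/-- The set of vertices with `f x = ∞`. -/
def Vinf : Set V := {x | Γ.f x = ⊤}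

/-- A Dyer group is of spherical type if the graph is complete and `D_2` is finite. -/
def Spherical : Prop :=
  (∀ x y : V, x ≠ y → Γ.Adj x y) ∧ (Γ.parabolic Γ.V2 : Set Γ.DyerGroup).Finite

/-- The set `A_X` of `X`-minimal elements. -/
def Amin (X : Set V) : Set Γ.DyerGroup :=
  {g | ∀ h ∈ Γ.parabolic X,
    sylLength (Set.range Γ.gen) g ≤ sylLength (Set.range Γ.gen) (g * h)}

/-- The set `B_X = A_X ∖ ⋃_{X ⊊ Y} A_Y`. -/
def Bmin (X : Set V) : Set Γ.DyerGroup :=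
  Γ.Amin X \ ⋃ (Y : Set V) (_ : X ⊂ Y), Γ.Amin Y

end DyerGraph

namespace DyerGraph

variable {V : Type*} (Γ : DyerGraph V)

/-! ### The coefficient module -/

/-- The order of the generator `x`, with `0` standing for `∞`, so that `ZMod (Γ.ord x)` is the
cyclic group of order `f x`. -/
def ord (x : V) : ℕ := (Γ.f x).toNat

/-- Families of elements of `ZMod n`, indexed by pairs `(r, n)`. Keeping `n` in the index
makes the coefficient group of a reflection independent of how it is written as a conjugate. -/
abbrev Coeff := ∀ i : Γ.DyerGroup × ℕ, ZMod i.2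

/-- Conjugation of the first coordinate of an index by `g⁻¹`. -/
def conjIdx (g : Γ.DyerGroup) : Γ.DyerGroup × ℕ ≃ Γ.DyerGroup × ℕ where
  toFun i := (g⁻¹ * i.1 * g, i.2)
  invFun i := (g * i.1 * g⁻¹, i.2)
  left_inv i := by ext <;> simp [mul_assoc]
  right_inv i := by ext <;> simp [mul_assoc]

/-- The action of `g` on families, by conjugation of the index. -/
def act (g : Γ.DyerGroup) (F : Γ.Coeff) : Γ.Coeff := fun i => F (g⁻¹ * i.1 * g, i.2)

/-- The unit vector at `(r, n)`. -/
noncomputable def unitVec (r : Γ.DyerGroup) (n : ℕ) : Γ.Coeff := Pi.single (r, n) 1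

variable {Γ}

theorem act_apply {g r s : Γ.DyerGroup} (h : g⁻¹ * r * g = s) (F : Γ.Coeff) (n : ℕ) :
    Γ.act g F (r, n) = F (s, n) := by
  subst h; rfl

theorem act_one (F : Γ.Coeff) : Γ.act 1 F = F := by
  funext ⟨r, n⟩; exact act_apply (by group) F n

theorem act_mul (g h : Γ.DyerGroup) (F : Γ.Coeff) : Γ.act (g * h) F = Γ.act g (Γ.act h F) := by
  funext ⟨r, n⟩; exact act_apply (by group) F n

theorem act_add (g : Γ.DyerGroup) (F G : Γ.Coeff) : Γ.act g (F + G) = Γ.act g F + Γ.act g G := rfl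

theorem act_zero (g : Γ.DyerGroup) : Γ.act g 0 = 0 := rfl

theorem act_inv_act (g : Γ.DyerGroup) (F : Γ.Coeff) : Γ.act g⁻¹ (Γ.act g F) = F := by
  rw [← act_mul, inv_mul_cancel, act_one]

theorem act_act_inv (g : Γ.DyerGroup) (F : Γ.Coeff) : Γ.act g (Γ.act g⁻¹ F) = F := by
  rw [← act_mul, mul_inv_cancel, act_one]

theorem unitVec_apply_ne {r : Γ.DyerGroup} {n : ℕ} {i : Γ.DyerGroup × ℕ}
    (h : i ≠ (r, n)) : Γ.unitVec r n i = 0 := by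
  simp [unitVec, h]

theorem unitVec_self (r : Γ.DyerGroup) (n : ℕ) : Γ.unitVec r n (r, n) = 1 := by
  simp [unitVec]

theorem act_unitVec (g r : Γ.DyerGroup) (n : ℕ) :
    Γ.act g (Γ.unitVec r n) = Γ.unitVec (g * r * g⁻¹) n := by
  funext ⟨s, k⟩
  by_cases h : (s, k) = (g * r * g⁻¹, n)
  · obtain ⟨rfl, rfl⟩ := Prod.mk.inj h
    rw [unitVec_self]
    rw [act_apply (s := r) (by group), unitVec_self]
  · rw [unitVec_apply_ne h]
    refine unitVec_apply_ne fun h' => h ?_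
    obtain ⟨h1, h2⟩ := Prod.mk.inj h'
    rw [← h1]
    simp only at h2
    subst h2
    ext <;> simp [mul_assoc]

theorem nsmul_unitVec (r : Γ.DyerGroup) (n : ℕ) : n • Γ.unitVec r n = 0 := by
  funext ⟨s, k⟩
  by_cases h : (s, k) = (r, n)
  · obtain ⟨rfl, rfl⟩ := Prod.mk.inj h
    simp
  · simp [unitVec_apply_ne h]

/-! ### The reflection cocycle -/

variable (Γ) in
/-- The affine bijection `F ↦ e (x, n x) + x • F` attached to a generator `x`. -/
noncomputable def affGen (x : V) : Equiv.Perm Γ.Coeff where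
  toFun F := Γ.unitVec (Γ.gen x) (Γ.ord x) + Γ.act (Γ.gen x) F
  invFun F := Γ.act (Γ.gen x)⁻¹ (F - Γ.unitVec (Γ.gen x) (Γ.ord x))
  left_inv F := by simp [act_inv_act]
  right_inv F := by simp [act_act_inv]

theorem affGen_apply (x : V) (F : Γ.Coeff) :
    Γ.affGen x F = Γ.unitVec (Γ.gen x) (Γ.ord x) + Γ.act (Γ.gen x) F := rfl

theorem gen_pow_ord (x : V) : Γ.gen x ^ Γ.ord x = 1 := by
  by_cases h : Γ.f x = ⊤
  · simp [ord, h]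
  · have : PresentedGroup.mk Γ.rels (FreeGroup.of x ^ (Γ.f x).toNat) = 1 :=
      PresentedGroup.one_of_mem (Or.inl ⟨x, h, rfl⟩)
    rwa [map_pow] at this

theorem affGen_pow_apply (x : V) (k : ℕ) (F : Γ.Coeff) :
    (Γ.affGen x ^ k) F = k • Γ.unitVec (Γ.gen x) (Γ.ord x) + Γ.act (Γ.gen x ^ k) F := by
  induction k with
  | zero => simp [act_one]
  | succ k ih =>
    have h : Γ.act (Γ.gen x) (k • Γ.unitVec (Γ.gen x) (Γ.ord x))
        = k • Γ.act (Γ.gen x) (Γ.unitVec (Γ.gen x) (Γ.ord x)) := rfl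
    rw [pow_succ', Equiv.Perm.mul_apply, ih, affGen_apply, act_add, ← act_mul, h, act_unitVec,
      mul_inv_cancel_right, ← pow_succ', succ_nsmul', add_assoc]

theorem affGen_pow_ord (x : V) : Γ.affGen x ^ Γ.ord x = 1 := by
  ext1 F
  rw [affGen_pow_apply, nsmul_unitVec, gen_pow_ord, act_one, zero_add, Equiv.Perm.one_apply]

/-- For involutions `s x` and `s y`, the braid relator `π(x,y,m) π(y,x,m)⁻¹` is the Coxeter
relator `(xy)^m`. -/
theorem lift_alt_of_involutions {G : Type*} [Group G] (s : V → G) (m : ℕ) :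
    ∀ x y : V, s x * s x = 1 → s y * s y = 1 →
      FreeGroup.lift s (altWord x y m * (altWord y x m)⁻¹) = (s x * s y) ^ m := by
  induction m with
  | zero => intro x y _ _; simp [altWord]
  | succ m ih =>
    intro x y hx hy
    have h := ih y x hy hx
    have hy' : (s y)⁻¹ = s y := inv_eq_of_mul_eq_one_left hy
    have h2 : ∀ k : ℕ, s x * (s y * s x) ^ k * s y = (s x * s y) ^ (k + 1) := by
      intro k
      induction k with
      | zero => simp
      | succ k ihk =>
        rw [pow_succ', pow_succ' _ (k + 1), ← ihk]
        simp only [mul_assoc]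
    rw [← h2, ← h]
    simp [altWord, mul_assoc, hy']

theorem lift_alt_rel_gen {x y : V} (h : Γ.Adj x y) :
    FreeGroup.lift Γ.gen (altWord x y (Γ.m x y) * (altWord y x (Γ.m x y))⁻¹) = 1 := by
  have h1 : PresentedGroup.mk Γ.rels (altWord x y (Γ.m x y) * (altWord y x (Γ.m x y))⁻¹) = 1 :=
    PresentedGroup.one_of_mem (Or.inr ⟨x, y, h, rfl⟩)
  have h2 : FreeGroup.lift Γ.gen = PresentedGroup.mk Γ.rels := by
    ext z; simp [gen, PresentedGroup.of]
  rw [h2, h1]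

/-- The translation part of `(ρ x ρ y)^k` for involutions `x`, `y` runs over the reflections
`(xy)^j x`, `j < 2k`. -/
theorem affGen_mul_pow_apply {x y : V} (hx : Γ.ord x = 2) (hy : Γ.ord y = 2) (k : ℕ)
    (F : Γ.Coeff) :
    ((Γ.affGen x * Γ.affGen y) ^ k) F =
      ∑ j ∈ Finset.range (2 * k), Γ.unitVec ((Γ.gen x * Γ.gen y) ^ j * Γ.gen x) 2 +
        Γ.act ((Γ.gen x * Γ.gen y) ^ k) F := by
  have hx2 : Γ.gen x * Γ.gen x = 1 := by rw [← pow_two, ← hx, gen_pow_ord]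
  have hy2 : Γ.gen y * Γ.gen y = 1 := by rw [← pow_two, ← hy, gen_pow_ord]
  have hxi : (Γ.gen x)⁻¹ = Γ.gen x := inv_eq_of_mul_eq_one_left hx2
  have hyi : (Γ.gen y)⁻¹ = Γ.gen y := inv_eq_of_mul_eq_one_left hy2
  set a := Γ.gen x * Γ.gen y with ha
  have hconj : ∀ k : ℕ, Γ.gen x * (a ^ k)⁻¹ = a ^ k * Γ.gen x := by
    intro k
    induction k with
    | zero => simp
    | succ k ih =>
      have h1 : Γ.gen x * a⁻¹ = a * Γ.gen x := by simp [ha, hxi, hyi, mul_assoc]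
      rw [pow_succ, mul_inv_rev, ← mul_assoc, h1, mul_assoc, ih, ← mul_assoc, ← pow_succ',
        pow_succ]
  induction k generalizing F with
  | zero => simp [act_one]
  | succ k ih =>
    rw [pow_succ, Equiv.Perm.mul_apply, ih, Equiv.Perm.mul_apply, affGen_apply, affGen_apply,
      hx, hy, act_add, act_add, act_add, act_unitVec, act_unitVec, act_unitVec, ← act_mul,
      ← act_mul, mul_assoc (a ^ k) (Γ.gen x) (Γ.gen y), ← ha, ← pow_succ, mul_add, mul_one, Finset.sum_range_succ,
      Finset.sum_range_succ]
    have e1 : a ^ k * Γ.gen x * (a ^ k)⁻¹ = a ^ (2 * k) * Γ.gen x := by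
      rw [mul_assoc, hconj, ← mul_assoc, ← pow_add, two_mul]
    have e2 : a ^ k * (a * (Γ.gen x)⁻¹) * (a ^ k)⁻¹
        = a ^ (2 * k + 1) * Γ.gen x := by
      rw [hxi, mul_assoc, mul_assoc, hconj, ← mul_assoc, ← mul_assoc, ← pow_succ,
        ← pow_add]
      congr 2; omega
    rw [e1, e2]
    abel

theorem lift_affGen_rel {r : FreeGroup V} (hr : r ∈ Γ.rels) :
    FreeGroup.lift Γ.affGen r = 1 := by
  rcases hr with ⟨x, -, rfl⟩ | ⟨x, y, hxy, rfl⟩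
  · rw [map_pow, FreeGroup.lift_apply_of]
    exact affGen_pow_ord x
  · have hrel := lift_alt_rel_gen hxy
    by_cases hm : Γ.m x y = 2
    · rw [hm] at hrel ⊢
      simp only [altWord, mul_one, map_mul, map_inv, FreeGroup.lift_apply_of] at hrel ⊢
      rw [mul_inv_eq_one] at hrel ⊢
      ext1 F
      have hyx : Γ.gen x * Γ.gen y * (Γ.gen x)⁻¹ = Γ.gen y := by
        rw [hrel, mul_inv_cancel_right]
      have hxy' : Γ.gen y * Γ.gen x * (Γ.gen y)⁻¹ = Γ.gen x := by
        rw [← hrel, mul_inv_cancel_right]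
      simp only [Equiv.Perm.mul_apply, affGen_apply, act_add, act_unitVec, ← act_mul, hyx, hxy']
      rw [hrel]
      abel
    · obtain ⟨hfx, hfy⟩ := Γ.compat hxy hm
      have hx : Γ.ord x = 2 := by simp [ord, hfx]
      have hy : Γ.ord y = 2 := by simp [ord, hfy]
      rw [lift_alt_of_involutions] at hrel
      rotate_left
      · rw [← pow_two, ← hx, gen_pow_ord]
      · rw [← pow_two, ← hy, gen_pow_ord]
      rw [lift_alt_of_involutions]
      rotate_left
      · rw [← pow_two, ← hx, affGen_pow_ord]
      · rw [← pow_two, ← hy, affGen_pow_ord]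
      ext1 F
      -- The summands have period `m`, so the `2m` of them cancel in pairs modulo `2`.
      rw [affGen_mul_pow_apply hx hy, hrel, act_one, two_mul, Finset.sum_range_add]
      simp only [pow_add, hrel, one_mul]
      rw [← two_nsmul, Finset.smul_sum,
        Finset.sum_eq_zero fun j _ => nsmul_unitVec _ 2, zero_add, Equiv.Perm.one_apply]

variable (Γ) in
/-- The affine action of the Dyer group on families. -/
noncomputable def aff : Γ.DyerGroup →* Equiv.Perm Γ.Coeff :=
  PresentedGroup.toGroup (f := Γ.affGen) fun _ hr => lift_affGen_rel hr

variable (Γ) in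
/-- The reflection cocycle `N`: the translation part of the affine action. -/
noncomputable def coc (g : Γ.DyerGroup) : Γ.Coeff := Γ.aff g 0

theorem aff_gen (x : V) : Γ.aff (Γ.gen x) = Γ.affGen x :=
  PresentedGroup.toGroup.of _

theorem closure_gen : Subgroup.closure (Set.range Γ.gen) = ⊤ :=
  PresentedGroup.closure_range_of Γ.rels

theorem aff_apply (g : Γ.DyerGroup) : ∀ F, Γ.aff g F = Γ.coc g + Γ.act g F := by
  have hg : g ∈ Subgroup.closure (Set.range Γ.gen) := by rw [closure_gen]; trivial
  induction hg using Subgroup.closure_induction with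
  | mem _ h =>
    obtain ⟨x, rfl⟩ := h
    intro F
    simp only [coc, aff_gen, affGen_apply, act_zero, add_zero]
  | one => intro F; simp [coc, act_one]
  | mul a b _ _ ha hb =>
    intro F
    simp only [coc, map_mul, Equiv.Perm.mul_apply] at *
    rw [hb, ha, ha (Γ.aff b 0), act_add, act_mul, add_assoc]
  | inv a _ ha =>
    intro F
    have h : ∀ F, Γ.aff a⁻¹ F = Γ.act a⁻¹ (F - Γ.coc a) := by
      intro F
      rw [map_inv, Equiv.Perm.inv_eq_iff_eq, ha, act_act_inv]
      abel
    rw [coc, h, h, sub_eq_add_neg, sub_eq_add_neg, act_add, act_add, act_zero, zero_add, add_comm]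

theorem coc_mul (g h : Γ.DyerGroup) : Γ.coc (g * h) = Γ.coc g + Γ.act g (Γ.coc h) := by
  rw [← aff_apply, coc, map_mul, Equiv.Perm.mul_apply, coc]

theorem coc_one : Γ.coc 1 = 0 := by simp [coc]

theorem coc_gen (x : V) : Γ.coc (Γ.gen x) = Γ.unitVec (Γ.gen x) (Γ.ord x) := by
  rw [coc, aff_gen, affGen_apply, act_zero, add_zero]

theorem coc_inv (g : Γ.DyerGroup) : Γ.coc g⁻¹ = -Γ.act g⁻¹ (Γ.coc g) := by
  have h := coc_mul g⁻¹ g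
  rw [inv_mul_cancel, coc_one] at h
  exact eq_neg_of_add_eq_zero_left h.symm

theorem coc_gen_zpow (x : V) (k : ℤ) :
    Γ.coc (Γ.gen x ^ k) = k • Γ.unitVec (Γ.gen x) (Γ.ord x) := by
  have hfix : ∀ j : ℤ, Γ.act (Γ.gen x ^ j) (Γ.unitVec (Γ.gen x) (Γ.ord x))
      = Γ.unitVec (Γ.gen x) (Γ.ord x) := by
    intro j
    rw [act_unitVec]
    congr 1
    group
  have hinv : Γ.act (Γ.gen x)⁻¹ (Γ.unitVec (Γ.gen x) (Γ.ord x))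
      = Γ.unitVec (Γ.gen x) (Γ.ord x) := by
    have := hfix (-1)
    rwa [zpow_neg_one] at this
  have hneg : ∀ (j : Γ.DyerGroup) (F : Γ.Coeff), Γ.act j (-F) = -Γ.act j F := fun _ _ => rfl
  induction k using Int.induction_on with
  | zero => simp [coc_one]
  | succ k ih => rw [zpow_add_one, coc_mul, ih, coc_gen, hfix, add_smul, one_smul]
  | pred k ih =>
    rw [zpow_sub_one, coc_mul, ih, coc_inv, coc_gen, hinv, hneg, hfix, sub_smul, one_smul,
      sub_eq_add_neg]

/-! ### Norms on families -/

variable (Γ) in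
/-- The total weight of a family, for a weight function `c` on the coefficients. Values
in `ENNReal` spare all summability hypotheses. -/
noncomputable def weight (c : ∀ n, ZMod n → ℕ) (F : Γ.Coeff) : ENNReal :=
  ∑' i, (c i.2 (F i) : ENNReal)

/-- The weight counting nonzero coefficients. -/
noncomputable def cSupp (n : ℕ) (a : ZMod n) : ℕ := if a = 0 then 0 else 1

/-- The weight given by the minimal absolute value of a representative. -/
def cAbs (n : ℕ) (a : ZMod n) : ℕ := a.valMinAbs.natAbs

theorem weight_act (c : ∀ n, ZMod n → ℕ) (g : Γ.DyerGroup) (F : Γ.Coeff) :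
    Γ.weight c (Γ.act g F) = Γ.weight c F :=
  (Γ.conjIdx g).tsum_eq fun i => (c i.2 (F i) : ENNReal)

theorem weight_add_le {c : ∀ n, ZMod n → ℕ} (hc : ∀ n a b, c n (a + b) ≤ c n a + c n b)
    (F G : Γ.Coeff) : Γ.weight c (F + G) ≤ Γ.weight c F + Γ.weight c G := by
  rw [weight, weight, weight, ← ENNReal.tsum_add]
  exact ENNReal.tsum_le_tsum fun i => by exact_mod_cast hc i.2 (F i) (G i)

theorem weight_add {c : ∀ n, ZMod n → ℕ} (hc : ∀ n, c n 0 = 0) {F G : Γ.Coeff}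
    (h : ∀ i, F i = 0 ∨ G i = 0) : Γ.weight c (F + G) = Γ.weight c F + Γ.weight c G := by
  rw [weight, weight, weight, ← ENNReal.tsum_add]
  refine tsum_congr fun i => ?_
  rcases h i with h | h <;> simp [h, hc]

theorem weight_zero {c : ∀ n, ZMod n → ℕ} (hc : ∀ n, c n 0 = 0) : Γ.weight c 0 = 0 := by
  simp [weight, hc]

theorem weight_zsmul {c : ∀ n, ZMod n → ℕ} (hc : ∀ n, c n 0 = 0) (r : Γ.DyerGroup) (n : ℕ)
    (k : ℤ) : Γ.weight c (k • Γ.unitVec r n) = c n (k : ZMod n) := by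
  rw [weight, tsum_eq_single (r, n)]
  · rw [Pi.smul_apply, unitVec_self]; simp
  · intro i hi
    rw [Pi.smul_apply, unitVec_apply_ne hi]; simp [hc]

theorem cSupp_zero (n : ℕ) : cSupp n 0 = 0 := by simp [cSupp]

theorem cAbs_zero (n : ℕ) : cAbs n 0 = 0 := by simp [cAbs]

theorem cSupp_add_le (n : ℕ) (a b : ZMod n) : cSupp n (a + b) ≤ cSupp n a + cSupp n b := by
  unfold cSupp; split_ifs <;> simp_all

theorem cAbs_add_le (n : ℕ) (a b : ZMod n) : cAbs n (a + b) ≤ cAbs n a + cAbs n b :=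
  (ZMod.natAbs_valMinAbs_add_le a b).trans (Int.natAbs_add_le _ _)

/-! ### Words -/

variable (Γ) in
/-- The element represented by a word in syllables. -/
def val (w : List (V × ℤ)) : Γ.DyerGroup := (w.map fun p => Γ.gen p.1 ^ p.2).prod

@[simp] theorem val_nil : Γ.val [] = 1 := rfl

@[simp] theorem val_cons (x : V) (a : ℤ) (w : List (V × ℤ)) :
    Γ.val ((x, a) :: w) = Γ.gen x ^ a * Γ.val w := by simp [val]

@[simp] theorem val_append (u w : List (V × ℤ)) : Γ.val (u ++ w) = Γ.val u * Γ.val w := by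
  simp [val]

theorem exists_val (g : Γ.DyerGroup) : ∃ w, Γ.val w = g := by
  have hg : g ∈ Subgroup.closure (Set.range Γ.gen) := by rw [closure_gen]; trivial
  induction hg using Subgroup.closure_induction with
  | mem _ h => obtain ⟨x, rfl⟩ := h; exact ⟨[(x, 1)], by simp⟩
  | one => exact ⟨[], rfl⟩
  | mul a b _ _ ha hb =>
    obtain ⟨u, rfl⟩ := ha
    obtain ⟨v, rfl⟩ := hb
    exact ⟨u ++ v, val_append u v⟩
  | inv a _ ha =>
    obtain ⟨u, rfl⟩ := ha
    clear * -
    induction u with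
    | nil => exact ⟨[], by simp⟩
    | cons p u ih =>
      obtain ⟨v, hv⟩ := ih
      obtain ⟨x, a⟩ := p
      exact ⟨v ++ [(x, -a)], by simp [hv]⟩

theorem sylLength_le (w : List (V × ℤ)) : sylLength (Set.range Γ.gen) (Γ.val w) ≤ w.length := by
  refine Nat.sInf_le ⟨w.map fun p => (Γ.gen p.1, p.2), by simp, ?_, ?_⟩
  · simp only [List.mem_map]
    rintro _ ⟨p, -, rfl⟩
    exact ⟨p.1, rfl⟩
  · simp [val, Function.comp_def]

theorem exists_sylLength (g : Γ.DyerGroup) :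
    ∃ w, Γ.val w = g ∧ w.length = sylLength (Set.range Γ.gen) g := by
  have hne : {n | ∃ w : List (Γ.DyerGroup × ℤ), w.length = n ∧
      (∀ p ∈ w, p.1 ∈ Set.range Γ.gen) ∧ (w.map fun p => p.1 ^ p.2).prod = g}.Nonempty := by
    obtain ⟨w, rfl⟩ := exists_val g
    refine ⟨_, w.map fun p => (Γ.gen p.1, p.2), rfl, ?_, ?_⟩
    · simp only [List.mem_map]
      rintro _ ⟨p, -, rfl⟩
      exact ⟨p.1, rfl⟩
    · simp [val, Function.comp_def]
  obtain ⟨w, hlen, hw, hprod⟩ := Nat.sInf_mem hne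
  have key : ∀ w : List (Γ.DyerGroup × ℤ), (∀ p ∈ w, p.1 ∈ Set.range Γ.gen) →
      ∃ w' : List (V × ℤ), w'.length = w.length ∧ Γ.val w' = (w.map fun p => p.1 ^ p.2).prod := by
    intro w
    induction w with
    | nil => intro _; exact ⟨[], rfl, rfl⟩
    | cons p w ih =>
      intro h
      obtain ⟨w', h1, h2⟩ := ih fun q hq => h q (List.mem_cons_of_mem _ hq)
      obtain ⟨x, hx⟩ := h p List.mem_cons_self
      exact ⟨(x, p.2) :: w', by simp [h1], by simp [h2, hx]⟩
  obtain ⟨w', h1, h2⟩ := key w hw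
  exact ⟨w', h2.trans hprod, h1.trans hlen⟩

theorem exists_wordLength (g : Γ.DyerGroup) :
    ∃ w : List Γ.DyerGroup, w.length = wordLength (Set.range Γ.gen) g ∧
      (∀ a ∈ w, a ∈ Set.range Γ.gen ∪ (Set.range Γ.gen)⁻¹) ∧ w.prod = g := by
  have hne : {n | ∃ w : List Γ.DyerGroup, w.length = n ∧
      (∀ a ∈ w, a ∈ Set.range Γ.gen ∪ (Set.range Γ.gen)⁻¹) ∧ w.prod = g}.Nonempty := by
    have hg : g ∈ Subgroup.closure (Set.range Γ.gen) := by rw [closure_gen]; trivial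
    rw [← Subgroup.mem_toSubmonoid, Subgroup.closure_toSubmonoid] at hg
    obtain ⟨w, hw, hp⟩ := Submonoid.exists_list_of_mem_closure hg
    exact ⟨_, w, rfl, hw, hp⟩
  exact Nat.sInf_mem hne

theorem wordLength_le {g : Γ.DyerGroup} (w : List Γ.DyerGroup)
    (hw : ∀ a ∈ w, a ∈ Set.range Γ.gen ∪ (Set.range Γ.gen)⁻¹) (hp : w.prod = g) :
    wordLength (Set.range Γ.gen) g ≤ w.length :=
  Nat.sInf_le ⟨w, rfl, hw, hp⟩

theorem wordLength_mul_le (g h : Γ.DyerGroup) :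
    wordLength (Set.range Γ.gen) (g * h) ≤
      wordLength (Set.range Γ.gen) g + wordLength (Set.range Γ.gen) h := by
  obtain ⟨u, hu, hu1, hu2⟩ := exists_wordLength g
  obtain ⟨v, hv, hv1, hv2⟩ := exists_wordLength h
  rw [← hu, ← hv, ← List.length_append]
  refine wordLength_le _ (fun a ha => ?_) (by simp [hu2, hv2])
  rcases List.mem_append.1 ha with h | h
  exacts [hu1 a h, hv1 a h]

theorem wordLength_gen_zpow_le (x : V) (k : ℤ) :
    wordLength (Set.range Γ.gen) (Γ.gen x ^ k) ≤ k.natAbs := by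
  rcases Int.eq_nat_or_neg k with ⟨n, rfl | rfl⟩
  · have := wordLength_le (g := Γ.gen x ^ (n : ℤ)) (List.replicate n (Γ.gen x))
      (fun a ha => Or.inl ⟨x, (List.eq_of_mem_replicate ha).symm⟩) (by simp)
    simpa using this
  · have := wordLength_le (g := Γ.gen x ^ (-(n : ℤ))) (List.replicate n (Γ.gen x)⁻¹)
      (fun a ha => Or.inr ⟨x, by rw [List.eq_of_mem_replicate ha, inv_inv]⟩) (by simp)
    simpa using this

/-! ### Exchange, and the two length formulas -/

/-- Every index in the support of `N (val w)` comes from a syllable of `w`. -/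
theorem exists_split (w : List (V × ℤ)) : ∀ (r : Γ.DyerGroup) (n : ℕ),
    Γ.coc (Γ.val w) (r, n) ≠ 0 → ∃ u x a v, w = u ++ (x, a) :: v ∧
      r = Γ.val u * Γ.gen x * (Γ.val u)⁻¹ ∧ n = Γ.ord x := by
  induction w with
  | nil => intro r n h; exact absurd (by rw [val_nil, coc_one]; rfl) h
  | cons p w ih =>
    obtain ⟨x, a⟩ := p
    intro r n h
    by_cases hr : (r, n) = (Γ.gen x, Γ.ord x)
    · obtain ⟨rfl, rfl⟩ := Prod.mk.inj hr
      exact ⟨[], x, a, w, rfl, by simp, rfl⟩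
    · rw [val_cons, coc_mul, coc_gen_zpow, Pi.add_apply, Pi.smul_apply, unitVec_apply_ne hr,
        smul_zero, zero_add] at h
      obtain ⟨u, y, b, v, rfl, h1, h2⟩ := ih _ _ h
      refine ⟨(x, a) :: u, y, b, v, rfl, ?_, h2⟩
      rw [val_cons, mul_inv_rev]
      calc r = Γ.gen x ^ a * ((Γ.gen x ^ a)⁻¹ * r * Γ.gen x ^ a) * (Γ.gen x ^ a)⁻¹ := by group
        _ = _ := by rw [h1]; simp only [mul_assoc]

/-- In a word of minimal syllable length, the first syllable `x ^ a` is nontrivial and its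
reflection does not occur in the rest. -/
theorem minimal_cons {x : V} {a : ℤ} {w : List (V × ℤ)}
    (h : ((x, a) :: w).length = sylLength (Set.range Γ.gen) (Γ.val ((x, a) :: w))) :
    w.length = sylLength (Set.range Γ.gen) (Γ.val w) ∧ ((a : ℤ) : ZMod (Γ.ord x)) ≠ 0 ∧
      Γ.coc (Γ.val w) (Γ.gen x, Γ.ord x) = 0 := by
  refine ⟨?_, ?_, ?_⟩
  · refine le_antisymm ?_ (sylLength_le w)
    obtain ⟨w', h1, h2⟩ := exists_sylLength (Γ.val w)
    have := sylLength_le (Γ := Γ) ((x, a) :: w')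
    rw [val_cons, h1, ← val_cons, ← h] at this
    simp only [List.length_cons] at this
    omega
  · intro ha
    obtain ⟨k, rfl⟩ := (ZMod.intCast_zmod_eq_zero_iff_dvd _ _).1 ha
    have h1 : Γ.val ((x, (Γ.ord x : ℤ) * k) :: w) = Γ.val w := by
      rw [val_cons, zpow_mul, zpow_natCast, gen_pow_ord, one_zpow, one_mul]
    rw [h1] at h
    have := sylLength_le (Γ := Γ) w
    simp only [List.length_cons] at h
    omega
  · by_contra hne
    obtain ⟨u, y, b, v, rfl, h1, -⟩ := exists_split w _ _ hne
    -- `x = u y u⁻¹`, so the later syllable `y ^ b` can be merged into the first one.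
    have h2 : Γ.val ((x, a) :: (u ++ (y, b) :: v)) = Γ.val ((x, a + b) :: (u ++ v)) := by
      simp only [val_cons, val_append]
      rw [zpow_add, mul_assoc]
      congr 1
      rw [h1, conj_zpow]
      group
    have h3 := sylLength_le (Γ := Γ) ((x, a + b) :: (u ++ v))
    rw [← h2, ← h] at h3
    simp at h3

/-- If the reflection of the first syllable does not occur in the rest of the word, the weight of
that syllable splits off. -/
theorem weight_minimal_cons {c : ∀ n, ZMod n → ℕ} (hc : ∀ n, c n 0 = 0) {x : V} {a : ℤ}
    {w : List (V × ℤ)} (h : Γ.coc (Γ.val w) (Γ.gen x, Γ.ord x) = 0) :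
    Γ.weight c (Γ.coc (Γ.val ((x, a) :: w))) =
      c (Γ.ord x) (a : ZMod (Γ.ord x)) + Γ.weight c (Γ.coc (Γ.val w)) := by
  rw [val_cons, coc_mul, coc_gen_zpow, weight_add hc, weight_zsmul hc, weight_act]
  intro i
  by_cases hi : i = (Γ.gen x, Γ.ord x)
  · right
    subst hi
    rwa [act_apply (s := Γ.gen x) (by group)]
  · left
    rw [Pi.smul_apply, unitVec_apply_ne hi, smul_zero]

theorem sylLength_eq (g : Γ.DyerGroup) :
    (sylLength (Set.range Γ.gen) g : ENNReal) = Γ.weight cSupp (Γ.coc g) := by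
  obtain ⟨w, rfl, h⟩ := exists_sylLength g
  rw [← h]
  induction w with
  | nil => simp [coc_one, weight_zero cSupp_zero]
  | cons p w ih =>
    obtain ⟨x, a⟩ := p
    obtain ⟨h1, h2, h3⟩ := minimal_cons h
    rw [weight_minimal_cons cSupp_zero h3, ← ih h1, cSupp, if_neg h2, List.length_cons]
    push_cast
    rw [add_comm]

theorem wordLength_eq (g : Γ.DyerGroup) :
    (wordLength (Set.range Γ.gen) g : ENNReal) = Γ.weight cAbs (Γ.coc g) := by
  apply le_antisymm
  · obtain ⟨w, rfl, h⟩ := exists_sylLength g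
    induction w with
    | nil =>
      have : wordLength (Set.range Γ.gen) (Γ.val []) ≤ 0 := wordLength_le [] (by simp) rfl
      rw [Nat.le_zero.1 this]
      simp
    | cons p w ih =>
      obtain ⟨x, a⟩ := p
      obtain ⟨h1, h2, h3⟩ := minimal_cons h
      rw [weight_minimal_cons cAbs_zero h3]
      refine le_trans ?_ (add_le_add_right (ih h1) _)
      rw [val_cons]
      -- Replace `a` by its representative of minimal absolute value modulo the order of `x`.
      have hpow : Γ.gen x ^ a = Γ.gen x ^ (a : ZMod (Γ.ord x)).valMinAbs := by
        have hd : ((Γ.ord x : ℕ) : ℤ) ∣ a - (a : ZMod (Γ.ord x)).valMinAbs := by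
          rw [← ZMod.intCast_zmod_eq_zero_iff_dvd]
          simp
        obtain ⟨k, hk⟩ := hd
        rw [eq_add_of_sub_eq hk, zpow_add, zpow_mul, zpow_natCast, gen_pow_ord, one_zpow, one_mul]
        congr 2
        simp
      rw [hpow]
      exact_mod_cast (wordLength_mul_le _ _).trans
        (Nat.add_le_add_right (wordLength_gen_zpow_le x _) _)
  · obtain ⟨w, hlen, hw, rfl⟩ := exists_wordLength g
    rw [← hlen]
    clear hlen
    induction w with
    | nil => simp [coc_one, weight_zero cAbs_zero]
    | cons b w ih =>
      have h1 : Γ.weight cAbs (Γ.coc b) ≤ 1 := by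
        have hk : ∀ (x : V) (k : ℤ), k.natAbs = 1 →
            Γ.weight cAbs (Γ.coc (Γ.gen x ^ k)) ≤ 1 := by
          intro x k hk
          rw [coc_gen_zpow, weight_zsmul cAbs_zero]
          have : cAbs (Γ.ord x) (k : ZMod (Γ.ord x)) ≤ 1 := by
            rw [← hk]
            generalize Γ.ord x = n
            rcases n with _ | n
            · exact le_refl _
            · exact ZMod.natAbs_min_of_le_div_two (n + 1) _ _ (by simp)
                (ZMod.natAbs_valMinAbs_le _)
          exact_mod_cast this
        rcases hw b List.mem_cons_self with ⟨x, rfl⟩ | ⟨x, hx⟩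
        · simpa using hk x 1 rfl
        · rw [← inv_inv b, ← hx]
          simpa using hk x (-1) rfl
      rw [List.prod_cons, coc_mul, List.length_cons]
      refine (weight_add_le cAbs_add_le _ _).trans ?_
      rw [weight_act]
      push_cast
      rw [add_comm]
      exact add_le_add (ih fun a ha => hw a (List.mem_cons_of_mem _ ha)) h1

/-! ### Parabolic cosets -/

/-- The support of `N h`, for `h ∈ D_X`, consists of reflections of `D_X`. -/
theorem coc_parabolic {X : Set V} {h : Γ.DyerGroup} (hh : h ∈ Γ.parabolic X) :
    ∀ (r : Γ.DyerGroup) (n : ℕ), Γ.coc h (r, n) ≠ 0 →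
      ∃ k ∈ Γ.parabolic X, ∃ x ∈ X, r = k * Γ.gen x * k⁻¹ := by
  induction hh using Subgroup.closure_induction with
  | mem _ h =>
    obtain ⟨x, hx, rfl⟩ := h
    intro r n hr
    rw [coc_gen] at hr
    refine ⟨1, one_mem _, x, hx, ?_⟩
    by_contra hne
    refine hr (unitVec_apply_ne fun h => hne ?_)
    rw [(Prod.mk.inj h).1]
    simp
  | one => intro r n hr; exact absurd (by rw [coc_one]; rfl) hr
  | mul a b ha _ iha ihb =>
    intro r n hr
    by_cases h : Γ.coc a (r, n) = 0
    · rw [coc_mul, Pi.add_apply, h, zero_add] at hr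
      obtain ⟨k, hk, x, hx, e⟩ := ihb _ _ hr
      refine ⟨a * k, mul_mem ha hk, x, hx, ?_⟩
      calc r = a * (a⁻¹ * r * a) * a⁻¹ := by group
        _ = _ := by rw [e]; group
    · exact iha _ _ h
  | inv a ha iha =>
    intro r n hr
    rw [coc_inv, Pi.neg_apply, neg_ne_zero] at hr
    obtain ⟨k, hk, x, hx, e⟩ := iha _ _ hr
    refine ⟨a⁻¹ * k, mul_mem (inv_mem ha) hk, x, hx, ?_⟩
    calc r = a⁻¹ * (a⁻¹⁻¹ * r * a⁻¹) * a := by group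
      _ = _ := by rw [e]; group

/-- If `g` has minimal syllable length in `g D_X`, then `N g` and `g • N h` have disjoint
supports for `h ∈ D_X`. -/
theorem disjoint_of_mem_Amin {X : Set V} {g h : Γ.DyerGroup} (hg : g ∈ Γ.Amin X)
    (hh : h ∈ Γ.parabolic X) (i : Γ.DyerGroup × ℕ) :
    Γ.coc g i = 0 ∨ Γ.act g (Γ.coc h) i = 0 := by
  by_contra! hne
  obtain ⟨h1, h2⟩ := hne
  obtain ⟨r, n⟩ := i
  obtain ⟨k, hk, x, hx, e⟩ := coc_parabolic hh _ _ h2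
  obtain ⟨w, hw, hlen⟩ := exists_sylLength g
  rw [← hw] at h1
  obtain ⟨u, y, a, v, rfl, e', -⟩ := exists_split w _ _ h1
  -- Deleting the syllable `y ^ a` multiplies `g` on the right by `k x ^ (-a) k⁻¹ ∈ D_X`.
  have hmem : k * Γ.gen x ^ (-a) * k⁻¹ ∈ Γ.parabolic X :=
    mul_mem (mul_mem hk (zpow_mem (Subgroup.subset_closure (Set.mem_image_of_mem _ hx)) _)) (inv_mem hk)
  have hval : g * (k * Γ.gen x ^ (-a) * k⁻¹) = Γ.val (u ++ v) := by
    rw [← conj_zpow, ← e]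
    have h3 : (g⁻¹ * r * g) ^ (-a) = g⁻¹ * r ^ (-a) * g := by
      have := conj_zpow (i := -a) (a := g⁻¹) (b := r)
      rwa [inv_inv] at this
    simp only
    rw [h3, e', conj_zpow, ← hw]
    simp only [val_append, val_cons]
    group
  have h4 := hg _ hmem
  have h5 := sylLength_le (Γ := Γ) (u ++ v)
  rw [hval, ← hlen] at h4
  simp at h4 h5
  omega

end DyerGraph

open DyerGraph in
/-- In each left coset `g D_X` there is a unique element `g₀` such that
`l_sy(g₀ h) = l_sy(g₀) + l_sy(h)` and `l(g₀ h) = l(g₀) + l(h)` for all `h ∈ D_X`. -/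
theorem exists_unique_left_coset_min
    {V : Type} [Fintype V] (Γ : DyerGraph V) (X : Set V) (g : Γ.DyerGroup) :
    ∃! g₀ : Γ.DyerGroup, (∃ h ∈ Γ.parabolic X, g₀ = g * h) ∧
      ∀ h ∈ Γ.parabolic X,
        sylLength (Set.range Γ.gen) (g₀ * h) =
          sylLength (Set.range Γ.gen) g₀ + sylLength (Set.range Γ.gen) h ∧
        wordLength (Set.range Γ.gen) (g₀ * h) =
          wordLength (Set.range Γ.gen) g₀ + wordLength (Set.range Γ.gen) h := by
  obtain ⟨g₀, ⟨h₀, hh₀, rfl⟩, hmin⟩ :=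
    (measure (sylLength (Set.range Γ.gen))).wf.has_min
      {g₀ | ∃ h ∈ Γ.parabolic X, g₀ = g * h} ⟨g, 1, one_mem _, (mul_one g).symm⟩
  have hA : g * h₀ ∈ Γ.Amin X := fun h hh =>
    not_lt.1 (hmin _ ⟨h₀ * h, mul_mem hh₀ hh, mul_assoc _ _ _⟩)
  refine ⟨g * h₀, ⟨⟨h₀, hh₀, rfl⟩, fun h hh => ⟨?_, ?_⟩⟩, ?_⟩
  · have key : (sylLength (Set.range Γ.gen) (g * h₀ * h) : ENNReal) =
        sylLength (Set.range Γ.gen) (g * h₀) + sylLength (Set.range Γ.gen) h := by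
      rw [sylLength_eq, sylLength_eq, sylLength_eq, coc_mul (g * h₀),
        weight_add cSupp_zero (disjoint_of_mem_Amin hA hh), weight_act]
    exact_mod_cast key
  · have key : (wordLength (Set.range Γ.gen) (g * h₀ * h) : ENNReal) =
        wordLength (Set.range Γ.gen) (g * h₀) + wordLength (Set.range Γ.gen) h := by
      rw [wordLength_eq, wordLength_eq, wordLength_eq, coc_mul (g * h₀),
        weight_add cAbs_zero (disjoint_of_mem_Amin hA hh), weight_act]
    exact_mod_cast key
  · rintro _ ⟨⟨h₁, hh₁, rfl⟩, hadd⟩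
    -- For `k = h₁⁻¹ h₀`, additivity gives `l_sy(g h₀) = l_sy(g h₁) + l_sy(k)`, while minimality
    -- gives `l_sy(g h₀) ≤ l_sy(g h₁)`; hence `l_sy(k) = 0`.
    have h1 := (hadd (h₁⁻¹ * h₀) (mul_mem (inv_mem hh₁) hh₀)).1
    have h2 := hA (h₀⁻¹ * h₁) (mul_mem (inv_mem hh₀) hh₁)
    have e1 : g * h₁ * (h₁⁻¹ * h₀) = g * h₀ := by group
    have e2 : g * h₀ * (h₀⁻¹ * h₁) = g * h₁ := by group
    rw [e1] at h1
    rw [e2] at h2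
    obtain ⟨w, hw, hlen⟩ := exists_sylLength (h₁⁻¹ * h₀)
    have hnil : w = [] := List.length_eq_zero_iff.1 (by omega)
    rw [hnil, val_nil] at hw
    rw [inv_mul_eq_one.1 hw.symm]
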